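/- Let n ≥ 2, m ≥ 1, R > 0, and let B_R(0) be the open ball of radius R centered at the origin in ℝⁿ. If u is a nonzero function, smooth on the closure of B_R(0), satisfying Δu = −μ₁(B_R(0))·u in B_R(0) and ∂u/∂n = 0 on ∂B_R(0) (i.e., u is a first nonzero Neumann eigenfunction of the Laplacian on the ball), then u satisfies Δ^{2m}u = Υ̂₁(B_R(0))·u in B_R(0) together with ∂(Δ^j u)/∂n = 0 on ∂B_R(0) for all j = 0, 1, …, 2m−1; that is, u is a Neumann eigenfunction of Δ^{2m} corresponding to its first nonzero Neumann eigenvalue Υ̂₁(B_R(0)). -/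

import Mathlib

open MeasureTheory Set Metric

noncomputable section

/-- The Laplacian of `f` (sum of second partial derivatives), with all derivatives
taken within the set `S`. -/
def lapWithin {n : ℕ} (S : Set (EuclideanSpace ℝ (Fin n)))
    (f : EuclideanSpace ℝ (Fin n) → ℝ) (x : EuclideanSpace ℝ (Fin n)) : ℝ :=
  ∑ i : Fin n, fderivWithin ℝ
    (fun y => fderivWithin ℝ f S y (EuclideanSpace.single i 1)) S x (EuclideanSpace.single i 1)

/-- `μ` is a Neumann eigenvalue of the Laplacian on the ball `B_R(0) ⊂ ℝⁿ`: there is a nonzero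
function `u`, smooth on the closed ball, with `Δu = −μ·u` in the open ball and vanishing outward
normal (i.e. radial) derivative on the boundary sphere. -/
def IsLapNeumannEigenvalueBall (n : ℕ) (R μ : ℝ) : Prop :=
  ∃ u : EuclideanSpace ℝ (Fin n) → ℝ,
    ContDiffOn ℝ (⊤ : ℕ∞) u (closedBall 0 R) ∧
    (∃ x ∈ closedBall (0 : EuclideanSpace ℝ (Fin n)) R, u x ≠ 0) ∧
    (∀ x ∈ ball (0 : EuclideanSpace ℝ (Fin n)) R,
      lapWithin (closedBall 0 R) u x = -μ * u x) ∧
    (∀ x : EuclideanSpace ℝ (Fin n), ‖x‖ = R →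
      fderivWithin ℝ u (closedBall 0 R) x (‖x‖⁻¹ • x) = 0)

/-- `Υ` is a Neumann eigenvalue of the bi-harmonic operator `Δ²` on the ball `B_R(0) ⊂ ℝⁿ`:
there is a nonzero function `u`, smooth on the closed ball, with `Δ²u = Υ·u` in the open ball and
`∂u/∂n = ∂(Δu)/∂n = 0` on the boundary sphere. -/
def IsBiLapNeumannEigenvalueBall (n : ℕ) (R Υ : ℝ) : Prop :=
  ∃ u : EuclideanSpace ℝ (Fin n) → ℝ,
    ContDiffOn ℝ (⊤ : ℕ∞) u (closedBall 0 R) ∧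
    (∃ x ∈ closedBall (0 : EuclideanSpace ℝ (Fin n)) R, u x ≠ 0) ∧
    (∀ x ∈ ball (0 : EuclideanSpace ℝ (Fin n)) R,
      lapWithin (closedBall 0 R) (lapWithin (closedBall 0 R) u) x = Υ * u x) ∧
    (∀ x : EuclideanSpace ℝ (Fin n), ‖x‖ = R →
      fderivWithin ℝ u (closedBall 0 R) x (‖x‖⁻¹ • x) = 0) ∧
    (∀ x : EuclideanSpace ℝ (Fin n), ‖x‖ = R →
      fderivWithin ℝ (lapWithin (closedBall 0 R) u) (closedBall 0 R) x (‖x‖⁻¹ • x) = 0)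

/-- `Υ` is a Neumann eigenvalue of the even-multi-Laplacian `Δ^(2m)` on the ball `B_R(0) ⊂ ℝⁿ`:
there is a nonzero function `u`, smooth on the closed ball, with `Δ^(2m)u = Υ·u` in the open ball
and `∂(Δʲu)/∂n = 0` on the boundary sphere for every `j = 0, 1, …, 2m−1`. -/
def IsPolyLapNeumannEigenvalueBall (n m : ℕ) (R Υ : ℝ) : Prop :=
  ∃ u : EuclideanSpace ℝ (Fin n) → ℝ,
    ContDiffOn ℝ (⊤ : ℕ∞) u (closedBall 0 R) ∧
    (∃ x ∈ closedBall (0 : EuclideanSpace ℝ (Fin n)) R, u x ≠ 0) ∧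
    (∀ x ∈ ball (0 : EuclideanSpace ℝ (Fin n)) R,
      (lapWithin (closedBall 0 R))^[2 * m] u x = Υ * u x) ∧
    (∀ j < 2 * m, ∀ x : EuclideanSpace ℝ (Fin n), ‖x‖ = R →
      fderivWithin ℝ ((lapWithin (closedBall 0 R))^[j] u) (closedBall 0 R) x (‖x‖⁻¹ • x) = 0)

/-!
By the divergence theorem on the ball, `-Δ` is symmetric and nonnegative for the `L²` semi-inner
product on the functions that are smooth up to the boundary and all of whose iterated Laplacians
satisfy the Neumann condition. For a symmetric nonnegative operator `T` and `τ > 0`, factoring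
`Tᵏ - τᵏ` shows that `Tᵏ v = τᵏ v` forces `T v = τ v`. Taking `k = 2m`, the positive Neumann
eigenvalues of `Δ^(2m)` are exactly the numbers `μ^(2m)` with `μ` a positive Neumann eigenvalue of
the Laplacian, with the same eigenfunctions, and `μ ↦ μ^(2m)` preserves the least one.
-/

open scoped ContDiff InnerProductSpace

local notation:max "𝔼" n:max => EuclideanSpace ℝ (Fin n)

section PartialDerivatives

variable {n : ℕ} {S : Set (𝔼 n)} {f g : 𝔼 n → ℝ} {F : Fin n → 𝔼 n → ℝ} {x : 𝔼 n}
  {k l : WithTop ℕ∞}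

/-- The `i`-th partial derivative of `f`, taken within the set `S`. -/
def partialWithin (S : Set (𝔼 n)) (i : Fin n) (f : 𝔼 n → ℝ) (x : 𝔼 n) : ℝ :=
  fderivWithin ℝ f S x (EuclideanSpace.single i 1)

/-- The divergence of the vector field with components `F i`, all derivatives being taken within
the set `S`; thus `lapWithin S f` is the divergence of the gradient of `f`. -/
def divWithin (S : Set (𝔼 n)) (F : Fin n → 𝔼 n → ℝ) (x : 𝔼 n) : ℝ :=
  ∑ i, partialWithin S i (F i) x

lemma lapWithin_eq_divWithin (S : Set (𝔼 n)) (f : 𝔼 n → ℝ) :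
    lapWithin S f = divWithin S fun i => partialWithin S i f :=
  rfl

lemma contDiffOn_partialWithin (hS : UniqueDiffOn ℝ S) (hf : ContDiffOn ℝ l f S) (hkl : k + 1 ≤ l)
    (i : Fin n) : ContDiffOn ℝ k (partialWithin S i f) S :=
  (hf.fderivWithin hS hkl).clm_apply contDiffOn_const

lemma contDiffOn_divWithin (hS : UniqueDiffOn ℝ S) (hF : ∀ i, ContDiffOn ℝ l (F i) S)
    (hkl : k + 1 ≤ l) : ContDiffOn ℝ k (divWithin S F) S :=
  ContDiffOn.sum fun i _ => contDiffOn_partialWithin hS (hF i) hkl i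

lemma contDiffOn_lapWithin (hS : UniqueDiffOn ℝ S) (hf : ContDiffOn ℝ l f S) (hkl : k + 1 + 1 ≤ l) :
    ContDiffOn ℝ k (lapWithin S f) S :=
  contDiffOn_divWithin hS (contDiffOn_partialWithin hS hf hkl) le_rfl

lemma contDiffOn_iterate_lapWithin (hS : UniqueDiffOn ℝ S) (hf : ContDiffOn ℝ ∞ f S) (j : ℕ) :
    ContDiffOn ℝ ∞ ((lapWithin S)^[j] f) S := by
  induction j generalizing f with
  | zero => exact hf
  | succ _ ih => exact ih (contDiffOn_lapWithin hS hf (by simp))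

lemma eqOn_partialWithin_of_eqOn (h : EqOn f g S) (i : Fin n) :
    EqOn (partialWithin S i f) (partialWithin S i g) S := fun x hx => by
  rw [partialWithin, partialWithin, fderivWithin_congr' h hx]

lemma eqOn_lapWithin_of_eqOn (h : EqOn f g S) : EqOn (lapWithin S f) (lapWithin S g) S :=
  fun _ hx => Finset.sum_congr rfl fun i _ =>
    eqOn_partialWithin_of_eqOn (eqOn_partialWithin_of_eqOn h i) i hx

lemma eqOn_iterate_lapWithin_of_eqOn (h : EqOn f g S) (j : ℕ) :
    EqOn ((lapWithin S)^[j] f) ((lapWithin S)^[j] g) S := by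
  induction j generalizing f g with
  | zero => exact h
  | succ _ ih => exact ih (eqOn_lapWithin_of_eqOn h)

lemma partialWithin_eq_zero_of_notMem (hS : IsClosed S) (hx : x ∉ S) (i : Fin n) (f : 𝔼 n → ℝ) :
    partialWithin S i f x = 0 := by
  rw [partialWithin, fderivWithin_zero_of_notMem_closure (by rwa [hS.closure_eq])]
  rfl

lemma partialWithin_add (hS : IsClosed S) (hSu : UniqueDiffOn ℝ S) (hf : DifferentiableOn ℝ f S)
    (hg : DifferentiableOn ℝ g S) (i : Fin n) :
    partialWithin S i (f + g) = partialWithin S i f + partialWithin S i g := by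
  ext x
  by_cases hx : x ∈ S
  · simp [partialWithin, fderivWithin_add (hSu x hx) (hf x hx) (hg x hx)]
  · simp [partialWithin_eq_zero_of_notMem hS hx]

lemma partialWithin_const_smul (hS : IsClosed S) (hSu : UniqueDiffOn ℝ S) (c : ℝ) (i : Fin n)
    (f : 𝔼 n → ℝ) : partialWithin S i (c • f) = c • partialWithin S i f := by
  ext x
  by_cases hx : x ∈ S
  · simp [partialWithin, fderivWithin_const_smul_field c (hSu x hx)]
  · simp [partialWithin_eq_zero_of_notMem hS hx]

lemma lapWithin_add (hS : IsClosed S) (hSu : UniqueDiffOn ℝ S) (hf : ContDiffOn ℝ 2 f S)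
    (hg : ContDiffOn ℝ 2 g S) : lapWithin S (f + g) = lapWithin S f + lapWithin S g := by
  have differentiableOn_partial {h : 𝔼 n → ℝ} (hh : ContDiffOn ℝ 2 h S) (i : Fin n) :
      DifferentiableOn ℝ (partialWithin S i h) S :=
    (contDiffOn_partialWithin hSu hh one_add_one_eq_two.le i).differentiableOn one_ne_zero
  ext x
  simp only [lapWithin_eq_divWithin, divWithin, Pi.add_apply, ← Finset.sum_add_distrib]
  refine Finset.sum_congr rfl fun i _ => ?_
  rw [partialWithin_add hS hSu (hf.differentiableOn two_ne_zero) (hg.differentiableOn two_ne_zero),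
    partialWithin_add hS hSu (differentiableOn_partial hf i) (differentiableOn_partial hg i),
    Pi.add_apply]

lemma lapWithin_const_smul (hS : IsClosed S) (hSu : UniqueDiffOn ℝ S) (c : ℝ) (f : 𝔼 n → ℝ) :
    lapWithin S (c • f) = c • lapWithin S f := by
  ext x
  simp only [lapWithin_eq_divWithin, divWithin, partialWithin_const_smul hS hSu, Pi.smul_apply,
    Finset.smul_sum]

lemma iterate_lapWithin_add (hS : IsClosed S) (hSu : UniqueDiffOn ℝ S) (hf : ContDiffOn ℝ ∞ f S)
    (hg : ContDiffOn ℝ ∞ g S) (j : ℕ) :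
    (lapWithin S)^[j] (f + g) = (lapWithin S)^[j] f + (lapWithin S)^[j] g := by
  induction j generalizing f g with
  | zero => rfl
  | succ j ih =>
    have two_le_infty : (2 : WithTop ℕ∞) ≤ ∞ := ENat.LEInfty.out
    rw [Function.iterate_succ_apply,
      lapWithin_add hS hSu (hf.of_le two_le_infty) (hg.of_le two_le_infty),
      ih (contDiffOn_lapWithin hSu hf (by simp)) (contDiffOn_lapWithin hSu hg (by simp))]
    rfl

lemma iterate_lapWithin_const_smul (hS : IsClosed S) (hSu : UniqueDiffOn ℝ S) (c : ℝ) (f : 𝔼 n → ℝ)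
    (j : ℕ) : (lapWithin S)^[j] (c • f) = c • (lapWithin S)^[j] f :=
  Function.Commute.iterate_left (g := (c • ·)) (lapWithin_const_smul hS hSu c) j f

lemma divWithin_mul (hSu : UniqueDiffWithinAt ℝ S x) (hf : DifferentiableWithinAt ℝ f S x)
    (hF : ∀ i, DifferentiableWithinAt ℝ (F i) S x) :
    divWithin S (fun i => f * F i) x =
      f x * divWithin S F x + ∑ i, F i x * partialWithin S i f x := by
  simp only [divWithin, Finset.mul_sum, ← Finset.sum_add_distrib]
  refine Finset.sum_congr rfl fun i _ => ?_
  simp [partialWithin, fderivWithin_mul hSu hf (hF i)]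

lemma divWithin_of_mem_nhds (hx : S ∈ nhds x) (F : Fin n → 𝔼 n → ℝ) :
    divWithin S F x = ∑ i, fderiv ℝ (F i) x (EuclideanSpace.single i 1) := by
  simp only [divWithin, partialWithin, fderivWithin_of_mem_nhds hx]

lemma sum_coord_mul_apply_single (T : 𝔼 n →L[ℝ] ℝ) (x : 𝔼 n) :
    ∑ i, x i * T (EuclideanSpace.single i 1) = T x := by
  simpa using congrArg T ((EuclideanSpace.basisFun (Fin n) ℝ).sum_repr x)

end PartialDerivatives

section DivergenceTheorem

section CompactSupport

variable {E F : Type*} [NormedAddCommGroup E] [NormedSpace ℝ E] [NormedAddCommGroup F]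
  [NormedSpace ℝ F] {f : E → F}

lemma integrable_fderiv_apply [MeasurableSpace E] [OpensMeasurableSpace E] {μ : Measure E}
    [IsFiniteMeasureOnCompacts μ] (hf : ContDiff ℝ 1 f) (hc : HasCompactSupport f) (v : E) :
    Integrable (fun x => fderiv ℝ f x v) μ :=
  ((hf.continuous_fderiv one_ne_zero).clm_apply continuous_const).integrable_of_hasCompactSupport
    (hc.fderiv_apply ℝ v)

lemma integral_fderiv_apply_eq_zero [FiniteDimensional ℝ E] [MeasurableSpace E] [BorelSpace E]
    {μ : Measure E} [μ.IsAddHaarMeasure] (hf : ContDiff ℝ 1 f) (hc : HasCompactSupport f) (v : E) :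
    ∫ x, fderiv ℝ f x v ∂μ = 0 := by
  simpa using integral_smul_fderiv_eq_neg_fderiv_smul_of_integrable (f := fun _ : E => (1 : ℝ))
    (μ := μ) (g := f) (v := v) (by simp) (by simpa using integrable_fderiv_apply hf hc v)
    (by simpa using hf.continuous.integrable_of_hasCompactSupport hc)
    (fun _ _ => differentiableAt_const 1) fun x _ => hf.differentiable one_ne_zero x

lemma contDiff_of_tsupport_subset {U : Set E} {k : WithTop ℕ∞} (hU : IsOpen U)
    (hf : ContDiffOn ℝ k f U) (hs : tsupport f ⊆ U) : ContDiff ℝ k f := by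
  refine contDiff_iff_contDiffAt.2 fun x => ?_
  by_cases hx : x ∈ tsupport f
  · exact hf.contDiffAt (hU.mem_nhds (hs hx))
  · exact contDiffAt_const.congr_of_eventuallyEq (notMem_tsupport_iff_eventuallyEq.1 hx)

end CompactSupport

variable {n : ℕ} {S U : Set (𝔼 n)} {F : Fin n → 𝔼 n → ℝ}

lemma setIntegral_divWithin_eq_zero_of_tsupport_subset (hU : IsOpen U) (hUS : U ⊆ S)
    (hF : ∀ i, ContDiffOn ℝ 1 (F i) U) (hc : ∀ i, HasCompactSupport (F i))
    (hs : ∀ i, tsupport (F i) ⊆ U) : ∫ x in U, divWithin S F x = 0 := by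
  have contDiff_F (i : Fin n) : ContDiff ℝ 1 (F i) := contDiff_of_tsupport_subset hU (hF i) (hs i)
  calc ∫ x in U, divWithin S F x
      = ∫ x in U, ∑ i, fderiv ℝ (F i) x (EuclideanSpace.single i 1) :=
        setIntegral_congr_fun hU.measurableSet fun x hx =>
          divWithin_of_mem_nhds (Filter.mem_of_superset (hU.mem_nhds hx) hUS) F
    _ = ∫ x, ∑ i, fderiv ℝ (F i) x (EuclideanSpace.single i 1) :=
        setIntegral_eq_integral_of_forall_compl_eq_zero fun x hx => Finset.sum_eq_zero fun i _ => by
          simp [fderiv_of_notMem_tsupport ℝ fun h => hx (hs i h)]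
    _ = ∑ i, ∫ x, fderiv ℝ (F i) x (EuclideanSpace.single i 1) :=
        integral_finsetSum _ fun i _ => integrable_fderiv_apply (contDiff_F i) (hc i) _
    _ = 0 := Finset.sum_eq_zero fun i _ => integral_fderiv_apply_eq_zero (contDiff_F i) (hc i) _

lemma continuous_deriv_smoothTransition : Continuous (deriv Real.smoothTransition) :=
  (Real.smoothTransition.contDiff (n := 1)).continuous_deriv le_rfl

lemma deriv_smoothTransition_eq_zero {t : ℝ} (ht : t ∉ Ioo 0 1) :
    deriv Real.smoothTransition t = 0 := by
  rcases le_or_gt t 0 with ht₀ | ht₀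
  · refine IsLocalMin.deriv_eq_zero (Filter.Eventually.of_forall fun s => ?_)
    rw [Real.smoothTransition.zero_of_nonpos ht₀]
    exact Real.smoothTransition.nonneg s
  · refine IsLocalMax.deriv_eq_zero (Filter.Eventually.of_forall fun s => ?_)
    rw [Real.smoothTransition.one_of_one_le (not_lt.1 fun ht₁ => ht ⟨ht₀, ht₁⟩)]
    exact Real.smoothTransition.le_one s

lemma exists_norm_deriv_smoothTransition_mul_le :
    ∃ M, ∀ t, ‖deriv Real.smoothTransition t * (t + 1)‖ ≤ M := by
  have continuous_mul : Continuous fun t => deriv Real.smoothTransition t * (t + 1) :=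
    continuous_deriv_smoothTransition.mul (continuous_add_const 1)
  refine continuous_mul.bounded_above_of_compact_support
    (HasCompactSupport.intro (isCompact_Icc (a := 0) (b := 1)) fun t ht => ?_)
  rw [deriv_smoothTransition_eq_zero fun h => ht (Ioo_subset_Icc_self h), zero_mul]

/-- A cutoff function for the domain `{x | 0 < ρ x}`: it is supported in the region where
`1 ≤ k * ρ`, and is equal to `1` where `2 ≤ k * ρ`. -/
def boundaryCutoff (ρ : 𝔼 n → ℝ) (k : ℝ) (x : 𝔼 n) : ℝ :=
  Real.smoothTransition (k * ρ x - 1)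

section BoundaryCutoff

variable {ρ : 𝔼 n → ℝ}

lemma contDiff_boundaryCutoff (hρ : ContDiff ℝ 1 ρ) (k : ℝ) :
    ContDiff ℝ 1 (boundaryCutoff ρ k) :=
  Real.smoothTransition.contDiff.comp ((contDiff_const.mul hρ).sub contDiff_const)

lemma tsupport_boundaryCutoff_subset (hρ : Continuous ρ) {k : ℝ} (hk : 0 ≤ k) :
    tsupport (boundaryCutoff ρ k) ⊆ {x | 0 < ρ x} := by
  have tsupport_subset : tsupport (boundaryCutoff ρ k) ⊆ {x | 1 ≤ k * ρ x} := by
    refine closure_minimal (fun x hx => ?_) (isClosed_le continuous_const (hρ.const_mul k))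
    by_contra h
    exact hx (Real.smoothTransition.zero_of_nonpos (sub_nonpos.2 (not_le.1 h).le))
  exact fun x hx => pos_of_mul_pos_right (one_pos.trans_le (tsupport_subset hx)) hk

lemma fderiv_boundaryCutoff (hρ : Differentiable ℝ ρ) (k : ℝ) (x : 𝔼 n) :
    fderiv ℝ (boundaryCutoff ρ k) x =
      (deriv Real.smoothTransition (k * ρ x - 1) * k) • fderiv ℝ ρ x := by
  have hasDerivAt_smoothTransition :
      HasDerivAt Real.smoothTransition (deriv Real.smoothTransition (k * ρ x - 1)) (k * ρ x - 1) :=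
    (Real.smoothTransition.contDiff.differentiable one_ne_zero _).hasDerivAt
  rw [mul_smul]
  exact (hasDerivAt_smoothTransition.comp_hasFDerivAt x
    (((hρ x).hasFDerivAt.const_mul k).sub_const 1)).fderiv

lemma divWithin_boundaryCutoff_mul (hρ : ContDiff ℝ 1 ρ)
    (hF : ∀ i, ContDiffOn ℝ 1 (F i) {x | 0 ≤ ρ x}) (k : ℝ) {x : 𝔼 n} (hx : 0 < ρ x) :
    divWithin {x | 0 ≤ ρ x} (fun i => boundaryCutoff ρ k * F i) x =
      boundaryCutoff ρ k x * divWithin {x | 0 ≤ ρ x} F x +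
        deriv Real.smoothTransition (k * ρ x - 1) * k *
          ∑ i, F i x * fderiv ℝ ρ x (EuclideanSpace.single i 1) := by
  have mem_nhds : {x | 0 ≤ ρ x} ∈ nhds x :=
    Filter.mem_of_superset ((isOpen_lt continuous_const hρ.continuous).mem_nhds hx)
      (ofPred_subset_ofPred.2 fun _ => le_of_lt)
  have cutoff_diff := (contDiff_boundaryCutoff hρ k).differentiable one_ne_zero x
  rw [divWithin_mul (uniqueDiffWithinAt_of_mem_nhds mem_nhds) cutoff_diff.differentiableWithinAt
    fun i => (hF i).differentiableOn one_ne_zero x hx.le, Finset.mul_sum]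
  congr 1
  refine Finset.sum_congr rfl fun i _ => ?_
  rw [partialWithin, fderivWithin_of_mem_nhds mem_nhds,
    fderiv_boundaryCutoff (hρ.differentiable one_ne_zero), smul_apply, smul_eq_mul]
  ring

lemma setIntegral_divWithin_boundaryCutoff_mul_eq_zero (hρ : ContDiff ℝ 1 ρ)
    (hK : IsCompact {x | 0 ≤ ρ x}) (hF : ∀ i, ContDiffOn ℝ 1 (F i) {x | 0 ≤ ρ x}) {k : ℝ}
    (hk : 0 ≤ k) :
    ∫ x in {x | 0 < ρ x}, divWithin {x | 0 ≤ ρ x} (fun i => boundaryCutoff ρ k * F i) x = 0 := by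
  have pos_subset : {x | 0 < ρ x} ⊆ {x | 0 ≤ ρ x} := ofPred_subset_ofPred.2 fun _ => le_of_lt
  have tsupport_subset (i : Fin n) : tsupport (boundaryCutoff ρ k * F i) ⊆ {x | 0 < ρ x} :=
    (tsupport_mul_subset_left ..).trans (tsupport_boundaryCutoff_subset hρ.continuous hk)
  exact setIntegral_divWithin_eq_zero_of_tsupport_subset
    (isOpen_lt continuous_const hρ.continuous) pos_subset
    (fun i => (contDiff_boundaryCutoff hρ k).contDiffOn.mul ((hF i).mono pos_subset))
    (fun i => hK.of_isClosed_subset (isClosed_tsupport _) ((tsupport_subset i).trans pos_subset))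
    tsupport_subset

lemma exists_norm_divWithin_boundaryCutoff_mul_le (hρ : ContDiff ℝ 1 ρ)
    (hK : IsCompact {x | 0 ≤ ρ x}) (hKu : UniqueDiffOn ℝ {x | 0 ≤ ρ x})
    (hF : ∀ i, ContDiffOn ℝ 1 (F i) {x | 0 ≤ ρ x}) {C : ℝ}
    (hC : ∀ x, 0 < ρ x → |∑ i, F i x * fderiv ℝ ρ x (EuclideanSpace.single i 1)| ≤ C * ρ x) :
    ∃ B, ∀ (k : ℝ) (x : 𝔼 n), 0 < ρ x →
      ‖divWithin {x | 0 ≤ ρ x} (fun i => boundaryCutoff ρ k * F i) x‖ ≤ B := by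
  obtain ⟨A, hA⟩ := hK.exists_bound_of_continuousOn
    (contDiffOn_divWithin (k := 0) hKu hF (by simp)).continuousOn
  obtain ⟨M, hM⟩ := exists_norm_deriv_smoothTransition_mul_le
  refine ⟨A + M * |C|, fun k x hx => ?_⟩
  rw [divWithin_boundaryCutoff_mul hρ hF k hx]
  refine norm_add_le_of_le ?_ ?_
  · rw [norm_mul, boundaryCutoff, Real.norm_of_nonneg (Real.smoothTransition.nonneg _)]
    exact (mul_le_of_le_one_left (norm_nonneg _) (Real.smoothTransition.le_one _)).trans
      (hA x hx.le)
  · have deriv_bound := hM (k * ρ x - 1)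
    rw [sub_add_cancel] at deriv_bound
    calc ‖deriv Real.smoothTransition (k * ρ x - 1) * k *
          ∑ i, F i x * fderiv ℝ ρ x (EuclideanSpace.single i 1)‖
        ≤ ‖deriv Real.smoothTransition (k * ρ x - 1) * k‖ * (|C| * ρ x) := by
          rw [norm_mul]
          gcongr
          exact (hC x hx).trans (mul_le_mul_of_nonneg_right (le_abs_self C) hx.le)
      _ = ‖deriv Real.smoothTransition (k * ρ x - 1) * (k * ρ x)‖ * |C| := by
          simp only [norm_mul, Real.norm_of_nonneg hx.le]
          ring
      _ ≤ M * |C| := by gcongr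

lemma tendsto_divWithin_boundaryCutoff_mul (hρ : ContDiff ℝ 1 ρ)
    (hF : ∀ i, ContDiffOn ℝ 1 (F i) {x | 0 ≤ ρ x}) {x : 𝔼 n} (hx : 0 < ρ x) :
    Filter.Tendsto (fun k : ℕ => divWithin {x | 0 ≤ ρ x} (fun i => boundaryCutoff ρ k * F i) x)
      Filter.atTop (nhds (divWithin {x | 0 ≤ ρ x} F x)) := by
  refine tendsto_const_nhds.congr' ?_
  filter_upwards [tendsto_natCast_atTop_atTop.eventually_ge_atTop (2 / ρ x)] with k hk
  have one_le : 1 ≤ k * ρ x - 1 := by linarith [(div_le_iff₀ hx).1 hk]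
  rw [divWithin_boundaryCutoff_mul hρ hF k hx, boundaryCutoff,
    Real.smoothTransition.one_of_one_le one_le,
    deriv_smoothTransition_eq_zero fun h => one_le.not_gt h.2]
  ring

-- The cutoffs `χ_k` have gradients of size `k` on the layer `1 ≤ k * ρ ≤ 2`, which the decay of
-- `F · ∇ρ` compensates: the divergences of `χ_k F`, whose integrals vanish, are dominated.
lemma setIntegral_divWithin_eq_zero (hρ : ContDiff ℝ 1 ρ) (hK : IsCompact {x | 0 ≤ ρ x})
    (hKu : UniqueDiffOn ℝ {x | 0 ≤ ρ x}) (hF : ∀ i, ContDiffOn ℝ 1 (F i) {x | 0 ≤ ρ x}) {C : ℝ}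
    (hC : ∀ x, 0 < ρ x → |∑ i, F i x * fderiv ℝ ρ x (EuclideanSpace.single i 1)| ≤ C * ρ x) :
    ∫ x in {x | 0 < ρ x}, divWithin {x | 0 ≤ ρ x} F x = 0 := by
  have pos_subset : {x | 0 < ρ x} ⊆ {x | 0 ≤ ρ x} := ofPred_subset_ofPred.2 fun _ => le_of_lt
  have measurableSet_pos : MeasurableSet {x | 0 < ρ x} :=
    (isOpen_lt continuous_const hρ.continuous).measurableSet
  obtain ⟨B, hB⟩ := exists_norm_divWithin_boundaryCutoff_mul_le hρ hK hKu hF hC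
  have aestronglyMeasurable_divWithin (k : ℕ) :
      AEStronglyMeasurable (divWithin {x | 0 ≤ ρ x} fun i => boundaryCutoff ρ k * F i)
        (volume.restrict {x | 0 < ρ x}) :=
    ((contDiffOn_divWithin (k := 0) hKu
      (fun i => (contDiff_boundaryCutoff hρ k).contDiffOn.mul (hF i))
      (by simp)).continuousOn.mono pos_subset).aestronglyMeasurable measurableSet_pos
  have tendsto_integral := tendsto_integral_of_dominated_convergence (fun _ => B)
    aestronglyMeasurable_divWithin
    (integrableOn_const ((measure_mono pos_subset).trans_lt hK.measure_lt_top).ne)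
    (fun k => ae_restrict_of_forall_mem measurableSet_pos fun x hx => hB k x hx)
    (ae_restrict_of_forall_mem measurableSet_pos fun x hx =>
      tendsto_divWithin_boundaryCutoff_mul hρ hF hx)
  simp only [setIntegral_divWithin_boundaryCutoff_mul_eq_zero hρ hK hF (Nat.cast_nonneg _)]
    at tendsto_integral
  exact tendsto_nhds_unique tendsto_integral tendsto_const_nhds

end BoundaryCutoff

lemma uniqueDiffOn_closedBall {E : Type*} [NormedAddCommGroup E] [NormedSpace ℝ E] (a : E) {R : ℝ}
    (hR : 0 < R) : UniqueDiffOn ℝ (closedBall a R) := by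
  refine uniqueDiffOn_convex (convex_closedBall a R) ?_
  rw [interior_closedBall a hR.ne']
  exact nonempty_ball.2 hR

-- The nearest point of the sphere to `x ≠ 0` is `(R / ‖x‖) • x`, at distance `R - ‖x‖`.
lemma norm_le_of_eq_zero_on_sphere {E F : Type*} [NormedAddCommGroup E] [NormedSpace ℝ E]
    [NormedAddCommGroup F] {R : ℝ} {K : NNReal} {h : E → F}
    (hK : LipschitzOnWith K h (closedBall 0 R)) (h_sphere : ∀ x, ‖x‖ = R → h x = 0) {x : E}
    (hx : x ≠ 0) (hxR : ‖x‖ ≤ R) : ‖h x‖ ≤ K * (R - ‖x‖) := by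
  have norm_pos : 0 < ‖x‖ := norm_pos_iff.2 hx
  have norm_proj : ‖(R / ‖x‖) • x‖ = R := by
    rw [norm_smul, norm_div, norm_norm, div_mul_cancel₀ _ norm_pos.ne',
      Real.norm_of_nonneg (norm_pos.le.trans hxR)]
  have dist_proj : ‖x - (R / ‖x‖) • x‖ = R - ‖x‖ := by
    have sub_eq : x - (R / ‖x‖) • x = (-(R - ‖x‖) / ‖x‖) • x := by
      rw [neg_sub, sub_div, div_self norm_pos.ne', sub_smul, one_smul]
    rw [sub_eq, norm_smul, norm_div, norm_norm, div_mul_cancel₀ _ norm_pos.ne', norm_neg,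
      Real.norm_of_nonneg (sub_nonneg.2 hxR)]
  calc ‖h x‖ = ‖h x - h ((R / ‖x‖) • x)‖ := by rw [h_sphere _ norm_proj, sub_zero]
    _ ≤ K * ‖x - (R / ‖x‖) • x‖ :=
      hK.norm_sub_le (by simpa using hxR) (by simpa using norm_proj.le)
    _ = K * (R - ‖x‖) := by rw [dist_proj]

lemma exists_abs_sum_coord_mul_le {R : ℝ} (hR : 0 < R)
    (hF : ∀ i, ContDiffOn ℝ 1 (F i) (closedBall 0 R))
    (h_sphere : ∀ x, ‖x‖ = R → ∑ i, x i * F i x = 0) :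
    ∃ C, ∀ x, ‖x‖ ≤ R → |∑ i, x i * F i x| ≤ C * (R ^ 2 - ‖x‖ ^ 2) := by
  have contDiffOn_sum : ContDiffOn ℝ 1 (fun x => ∑ i, x i * F i x) (closedBall 0 R) :=
    ContDiffOn.sum fun i _ => (EuclideanSpace.proj (𝕜 := ℝ) i).contDiff.contDiffOn.mul (hF i)
  obtain ⟨K, hK⟩ := contDiffOn_sum.exists_lipschitzOnWith one_ne_zero (convex_closedBall 0 R)
    (isCompact_closedBall 0 R)
  refine ⟨K / R, fun x hxR => ?_⟩
  have radius_gap : R * (R - ‖x‖) ≤ R ^ 2 - ‖x‖ ^ 2 := by nlinarith [norm_nonneg x]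
  rcases eq_or_ne x 0 with rfl | hx
  · have bound_nonneg : 0 ≤ K / R * R ^ 2 := by positivity
    simpa using bound_nonneg
  · calc |∑ i, x i * F i x| ≤ K * (R - ‖x‖) := norm_le_of_eq_zero_on_sphere hK h_sphere hx hxR
      _ = K / R * (R * (R - ‖x‖)) := by field_simp
      _ ≤ K / R * (R ^ 2 - ‖x‖ ^ 2) := by gcongr

lemma setIntegral_ball_divWithin_eq_zero {R : ℝ} (hR : 0 < R)
    (hF : ∀ i, ContDiffOn ℝ 1 (F i) (closedBall 0 R))
    (h_sphere : ∀ x, ‖x‖ = R → ∑ i, x i * F i x = 0) :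
    ∫ x in ball 0 R, divWithin (closedBall 0 R) F x = 0 := by
  let ρ : 𝔼 n → ℝ := fun x => R ^ 2 - ‖x‖ ^ 2
  have closedBall_eq : closedBall 0 R = {x | 0 ≤ ρ x} := by
    ext x
    simp [ρ, abs_of_pos hR, sq_le_sq]
  have ball_eq : ball 0 R = {x | 0 < ρ x} := by
    ext x
    simp [ρ, abs_of_pos hR, sq_lt_sq]
  have contDiff_ρ : ContDiff ℝ 1 ρ := contDiff_const.sub (contDiff_norm_sq ℝ)
  have fderiv_ρ (x : 𝔼 n) (i : Fin n) :
      fderiv ℝ ρ x (EuclideanSpace.single i 1) = -(2 * x i) := by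
    rw [((hasStrictFDerivAt_norm_sq x).hasFDerivAt.const_sub (R ^ 2)).fderiv]
    simp [EuclideanSpace.inner_single_right]
  obtain ⟨C, hC⟩ := exists_abs_sum_coord_mul_le hR hF h_sphere
  have sum_bound (x : 𝔼 n) (hx : 0 < ρ x) :
      |∑ i, F i x * fderiv ℝ ρ x (EuclideanSpace.single i 1)| ≤ 2 * C * ρ x := by
    have mem_closedBall : x ∈ closedBall 0 R := closedBall_eq ▸ hx.le
    calc |∑ i, F i x * fderiv ℝ ρ x (EuclideanSpace.single i 1)|
        = |(-2) * ∑ i, x i * F i x| := by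
          rw [Finset.mul_sum]
          exact congrArg abs (Finset.sum_congr rfl fun i _ => by rw [fderiv_ρ]; ring)
      _ = 2 * |∑ i, x i * F i x| := by rw [abs_mul, abs_neg, abs_two]
      _ ≤ 2 * (C * ρ x) := by gcongr; exact hC x (mem_closedBall_zero_iff.1 mem_closedBall)
      _ = 2 * C * ρ x := by ring
  rw [ball_eq, closedBall_eq]
  exact setIntegral_divWithin_eq_zero contDiff_ρ (closedBall_eq ▸ isCompact_closedBall 0 R)
    (closedBall_eq ▸ uniqueDiffOn_closedBall 0 hR) (fun i => closedBall_eq ▸ hF i) sum_bound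

end DivergenceTheorem

section Green

variable {n : ℕ} {R : ℝ} {f g : 𝔼 n → ℝ}

/-- The Neumann boundary condition `∂f/∂n = 0` on the sphere of radius `R` centred at the origin,
for a function `f` on the closed ball. -/
def HasZeroNormalDeriv (R : ℝ) (f : 𝔼 n → ℝ) : Prop :=
  ∀ x : 𝔼 n, ‖x‖ = R → fderivWithin ℝ f (closedBall 0 R) x (‖x‖⁻¹ • x) = 0

lemma hasZeroNormalDeriv_congr (h : EqOn f g (closedBall 0 R)) :
    HasZeroNormalDeriv R f ↔ HasZeroNormalDeriv R g :=
  forall₂_congr fun x hx => by rw [fderivWithin_congr' h (by simp [hx])]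

lemma hasZeroNormalDeriv_add (hR : 0 < R) (hf : DifferentiableOn ℝ f (closedBall 0 R))
    (hg : DifferentiableOn ℝ g (closedBall 0 R)) (hfR : HasZeroNormalDeriv R f)
    (hgR : HasZeroNormalDeriv R g) : HasZeroNormalDeriv R (f + g) := fun x hx => by
  have mem_closedBall : x ∈ closedBall 0 R := by simp [hx]
  rw [fderivWithin_add (uniqueDiffOn_closedBall 0 hR x mem_closedBall) (hf x mem_closedBall)
    (hg x mem_closedBall), add_apply, hfR x hx, hgR x hx, add_zero]

lemma hasZeroNormalDeriv_const_smul (hR : 0 < R) (c : ℝ) (hf : HasZeroNormalDeriv R f) :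
    HasZeroNormalDeriv R (c • f) := fun x hx => by
  rw [fderivWithin_const_smul_field c (uniqueDiffOn_closedBall 0 hR x (by simp [hx])), smul_apply,
    hf x hx, smul_zero]

lemma sum_coord_mul_partialWithin_eq_zero (hR : 0 < R) (hf : HasZeroNormalDeriv R f) {x : 𝔼 n}
    (hx : ‖x‖ = R) : ∑ i, x i * partialWithin (closedBall 0 R) i f x = 0 := by
  have normal_deriv := hf x hx
  rw [map_smul, smul_eq_zero, hx, ← sum_coord_mul_apply_single] at normal_deriv
  exact normal_deriv.resolve_left (inv_ne_zero hR.ne')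

lemma integrableOn_ball_of_continuousOn (hf : ContinuousOn f (closedBall 0 R)) :
    IntegrableOn f (ball 0 R) :=
  (hf.integrableOn_compact (isCompact_closedBall 0 R)).mono_set ball_subset_closedBall

theorem setIntegral_ball_mul_lapWithin (hR : 0 < R) (hf : ContDiffOn ℝ 1 f (closedBall 0 R))
    (hg : ContDiffOn ℝ 2 g (closedBall 0 R)) (hgR : HasZeroNormalDeriv R g) :
    ∫ x in ball 0 R, f x * lapWithin (closedBall 0 R) g x =
      -∫ x in ball 0 R,
        ∑ i, partialWithin (closedBall 0 R) i f x * partialWithin (closedBall 0 R) i g x := by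
  have hu := uniqueDiffOn_closedBall (0 : 𝔼 n) hR
  have contDiffOn_partial (i : Fin n) :
      ContDiffOn ℝ 1 (partialWithin (closedBall 0 R) i g) (closedBall 0 R) :=
    contDiffOn_partialWithin hu hg one_add_one_eq_two.le i
  have field_normal (x : 𝔼 n) (hx : ‖x‖ = R) :
      ∑ i, x i * (f * partialWithin (closedBall 0 R) i g) x = 0 := by
    simp only [Pi.mul_apply, mul_left_comm (x _), ← Finset.mul_sum,
      sum_coord_mul_partialWithin_eq_zero hR hgR hx, mul_zero]
  have integrable_mul_lap :
      IntegrableOn (fun x => f x * lapWithin (closedBall 0 R) g x) (ball 0 R) :=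
    integrableOn_ball_of_continuousOn (hf.continuousOn.mul
      (contDiffOn_lapWithin (k := 0) hu hg (by norm_num)).continuousOn)
  have integrable_grad_mul_grad : IntegrableOn (fun x =>
      ∑ i, partialWithin (closedBall 0 R) i f x * partialWithin (closedBall 0 R) i g x)
      (ball 0 R) :=
    integrableOn_ball_of_continuousOn (continuousOn_finsetSum _ fun i _ =>
      (contDiffOn_partialWithin (k := 0) hu hf (by simp) i).continuousOn.mul
        (contDiffOn_partial i).continuousOn)
  rw [eq_neg_iff_add_eq_zero, ← integral_add integrable_mul_lap integrable_grad_mul_grad,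
    ← setIntegral_ball_divWithin_eq_zero hR (fun i => hf.mul (contDiffOn_partial i)) field_normal]
  refine setIntegral_congr_fun measurableSet_ball fun x hx => ?_
  have hxK : x ∈ closedBall 0 R := ball_subset_closedBall hx
  simp only [lapWithin_eq_divWithin, mul_comm (partialWithin _ _ f x)]
  exact (divWithin_mul (hu x hxK) (hf.differentiableOn one_ne_zero x hxK) fun i =>
    (contDiffOn_partial i).differentiableOn one_ne_zero x hxK).symm

lemma setIntegral_ball_lapWithin_mul_comm (hR : 0 < R) (hf : ContDiffOn ℝ 2 f (closedBall 0 R))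
    (hg : ContDiffOn ℝ 2 g (closedBall 0 R)) (hfR : HasZeroNormalDeriv R f)
    (hgR : HasZeroNormalDeriv R g) :
    ∫ x in ball 0 R, lapWithin (closedBall 0 R) f x * g x =
      ∫ x in ball 0 R, f x * lapWithin (closedBall 0 R) g x := by
  simp only [mul_comm (lapWithin _ f _)]
  rw [setIntegral_ball_mul_lapWithin hR (hf.of_le one_le_two) hg hgR,
    setIntegral_ball_mul_lapWithin hR (hg.of_le one_le_two) hf hfR]
  simp only [mul_comm]

lemma setIntegral_ball_lapWithin_mul_self_nonpos (hR : 0 < R)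
    (hf : ContDiffOn ℝ 2 f (closedBall 0 R)) (hfR : HasZeroNormalDeriv R f) :
    ∫ x in ball 0 R, lapWithin (closedBall 0 R) f x * f x ≤ 0 := by
  simp only [mul_comm (lapWithin _ f _)]
  rw [setIntegral_ball_mul_lapWithin hR (hf.of_le one_le_two) hf hfR, neg_nonpos]
  exact integral_nonneg fun x => Finset.sum_nonneg fun i _ => mul_self_nonneg _

end Green

lemma sum_smul_pow_apply_sub_smul {R M : Type*} [CommRing R] [AddCommGroup M] [Module R M]
    (T : Module.End R M) (c : R) (k : ℕ) (v : M) :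
    ∑ j ∈ Finset.range k, c ^ (k - 1 - j) • (T ^ j) (T v - c • v) = (T ^ k) v - c ^ k • v := by
  have comm : Commute T (c • 1) := (Commute.one_right T).smul_right c
  simpa [smul_pow] using LinearMap.congr_fun (comm.geom_sum₂_mul k) v

section SymmetricOperator

variable {𝕜 E : Type*} [RCLike 𝕜] [SeminormedAddCommGroup E] [InnerProductSpace 𝕜 E]
  {T : E →ₗ[𝕜] E}

lemma re_inner_pow_apply_nonneg (hT : T.IsSymmetric) (hpos : ∀ x, 0 ≤ RCLike.re ⟪T x, x⟫_𝕜) (j : ℕ)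
    (x : E) : 0 ≤ RCLike.re ⟪(T ^ j) x, x⟫_𝕜 := by
  rcases Nat.even_or_odd' j with ⟨i, rfl | rfl⟩
  · rw [two_mul, pow_add, Module.End.mul_apply, hT.pow i]
    exact inner_self_nonneg
  · rw [two_mul, add_assoc, pow_add, pow_succ', Module.End.mul_apply, hT.pow i,
      Module.End.mul_apply]
    exact hpos _

-- With `w = T v - τ v`, factoring `T ^ k - τ ^ k` gives
-- `∑ j < k, τ ^ (k - 1 - j) * ⟪T ^ j w, w⟫ = 0`, a sum of nonnegative terms whose first one is
-- `τ ^ (k - 1) * ‖w‖ ^ 2`.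
theorem norm_apply_sub_smul_eq_zero_of_pow (hT : T.IsSymmetric)
    (hpos : ∀ x, 0 ≤ RCLike.re ⟪T x, x⟫_𝕜) {τ : ℝ} (hτ : 0 < τ) {k : ℕ} (hk : k ≠ 0) {v : E}
    (hv : ‖(T ^ k) v - ((τ : 𝕜) ^ k) • v‖ = 0) : ‖T v - (τ : 𝕜) • v‖ = 0 := by
  set w := T v - (τ : 𝕜) • v
  have sum_eq_zero :
      ∑ j ∈ Finset.range k, τ ^ (k - 1 - j) * RCLike.re ⟪(T ^ j) w, w⟫_𝕜 = 0 := by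
    have inner_eq_zero : ⟪(T ^ k) v - ((τ : 𝕜) ^ k) • v, w⟫_𝕜 = 0 :=
      norm_eq_zero.1 (le_antisymm ((norm_inner_le_norm _ _).trans_eq (by rw [hv, zero_mul]))
        (norm_nonneg _))
    rw [← sum_smul_pow_apply_sub_smul, sum_inner] at inner_eq_zero
    simpa only [inner_smul_left, ← RCLike.ofReal_pow, RCLike.conj_ofReal, map_sum,
      RCLike.re_ofReal_mul, map_zero] using congrArg RCLike.re inner_eq_zero
  have term_nonneg (j : ℕ) : 0 ≤ τ ^ (k - 1 - j) * RCLike.re ⟪(T ^ j) w, w⟫_𝕜 :=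
    mul_nonneg (pow_nonneg hτ.le _) (re_inner_pow_apply_nonneg hT hpos j w)
  have first_term := (Finset.sum_eq_zero_iff_of_nonneg fun j _ => term_nonneg j).1 sum_eq_zero 0
    (Finset.mem_range.2 hk.bot_lt)
  simpa [hτ.ne'] using first_term

end SymmetricOperator

section NeumannSpace

variable {n : ℕ} {R : ℝ}

/-- The functions smooth on the closed ball of radius `R` all of whose iterated Laplacians satisfy
the Neumann condition: the domain on which `Δ` is an endomorphism. Elements are functions on the
whole space, so two of them may agree on the ball without being equal. -/
def neumannSpace (n : ℕ) {R : ℝ} (hR : 0 < R) : Submodule ℝ (𝔼 n → ℝ) where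
  carrier := {f | ContDiffOn ℝ ∞ f (closedBall 0 R) ∧
    ∀ j, HasZeroNormalDeriv R ((lapWithin (closedBall 0 R))^[j] f)}
  add_mem' := by
    rintro f g ⟨hf, hfR⟩ ⟨hg, hgR⟩
    have hu := uniqueDiffOn_closedBall (0 : 𝔼 n) hR
    have differentiableOn_iterate {h : 𝔼 n → ℝ} (hh : ContDiffOn ℝ ∞ h (closedBall 0 R)) (j : ℕ) :
        DifferentiableOn ℝ ((lapWithin (closedBall 0 R))^[j] h) (closedBall 0 R) :=
      (contDiffOn_iterate_lapWithin hu hh j).differentiableOn (by simp)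
    refine ⟨hf.add hg, fun j => ?_⟩
    rw [iterate_lapWithin_add isClosed_closedBall hu hf hg]
    exact hasZeroNormalDeriv_add hR (differentiableOn_iterate hf j) (differentiableOn_iterate hg j)
      (hfR j) (hgR j)
  zero_mem' := by
    refine ⟨contDiffOn_const, fun j => ?_⟩
    have iterate_zero := iterate_lapWithin_const_smul isClosed_closedBall
      (uniqueDiffOn_closedBall (0 : 𝔼 n) hR) 0 0 j
    rw [zero_smul, zero_smul] at iterate_zero
    rw [iterate_zero]
    intro x _
    simp
  smul_mem' := by
    rintro c f ⟨hf, hfR⟩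
    refine ⟨contDiffOn_const.smul hf, fun j => ?_⟩
    rw [iterate_lapWithin_const_smul isClosed_closedBall (uniqueDiffOn_closedBall 0 hR)]
    exact hasZeroNormalDeriv_const_smul hR c (hfR j)

variable {hR : 0 < R}

/-- The operator `-Δ` on `neumannSpace`. -/
def negNeumannLap (n : ℕ) {R : ℝ} (hR : 0 < R) : Module.End ℝ (neumannSpace n hR) where
  toFun f := -⟨lapWithin (closedBall 0 R) f,
    contDiffOn_iterate_lapWithin (uniqueDiffOn_closedBall 0 hR) f.2.1 1, fun j => f.2.2 (j + 1)⟩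
  map_add' f g := by
    ext1
    simp [lapWithin_add isClosed_closedBall (uniqueDiffOn_closedBall 0 hR)
      (f.2.1.of_le ENat.LEInfty.out) (g.2.1.of_le ENat.LEInfty.out), add_comm]
  map_smul' c f := by
    ext1
    simp [lapWithin_const_smul isClosed_closedBall (uniqueDiffOn_closedBall 0 hR)]

lemma coe_negNeumannLap (f : neumannSpace n hR) :
    (negNeumannLap n hR f : 𝔼 n → ℝ) = -lapWithin (closedBall 0 R) f :=
  rfl

lemma coe_negNeumannLap_pow (f : neumannSpace n hR) (k : ℕ) :
    ((negNeumannLap n hR ^ k) f : 𝔼 n → ℝ) =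
      (-1 : ℝ) ^ k • (lapWithin (closedBall 0 R))^[k] f := by
  induction k with
  | zero => simp
  | succ k ih =>
    rw [pow_succ', Module.End.mul_apply, coe_negNeumannLap, ih, lapWithin_const_smul
      isClosed_closedBall (uniqueDiffOn_closedBall 0 hR), Function.iterate_succ_apply', pow_succ',
      neg_one_mul, neg_smul]

-- The instances are local because the topology of the seminorm is not the one that the subtype
-- inherits from the space of functions.
local instance : PreInnerProductSpace.Core ℝ (neumannSpace n hR) where
  inner f g := ∫ x in ball 0 R, (f : 𝔼 n → ℝ) x * (g : 𝔼 n → ℝ) x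
  conj_inner_symm f g := by simp only [mul_comm, conj_trivial]
  re_inner_nonneg f := integral_nonneg fun x => mul_self_nonneg _
  add_left f g h := by
    rw [← integral_add (integrableOn_ball_of_continuousOn (f.2.1.mul h.2.1).continuousOn)
      (integrableOn_ball_of_continuousOn (g.2.1.mul h.2.1).continuousOn)]
    simp only [Submodule.coe_add, Pi.add_apply, add_mul]
  smul_left f g c := by
    simp only [Submodule.coe_smul, Pi.smul_apply, smul_eq_mul, mul_assoc, integral_const_mul,
      conj_trivial]

local instance : SeminormedAddCommGroup (neumannSpace n hR) :=
  InnerProductSpace.Core.toSeminormedAddCommGroup (𝕜 := ℝ)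

local instance : InnerProductSpace ℝ (neumannSpace n hR) :=
  .ofCore _

lemma neumannSpace_inner_def (f g : neumannSpace n hR) :
    ⟪f, g⟫_ℝ = ∫ x in ball 0 R, (f : 𝔼 n → ℝ) x * (g : 𝔼 n → ℝ) x :=
  rfl

lemma neumannSpace_norm_eq_zero_iff {f : neumannSpace n hR} :
    ‖f‖ = 0 ↔ EqOn (f : 𝔼 n → ℝ) 0 (ball 0 R) := by
  have continuousOn_ball : ContinuousOn (f : 𝔼 n → ℝ) (ball 0 R) :=
    f.2.1.continuousOn.mono ball_subset_closedBall
  rw [← sq_eq_zero_iff, ← real_inner_self_eq_norm_sq, neumannSpace_inner_def,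
    setIntegral_eq_zero_iff_of_nonneg_ae (ae_of_all _ fun x => mul_self_nonneg _)
      (integrableOn_ball_of_continuousOn (f.2.1.mul f.2.1).continuousOn)]
  constructor
  · intro sq_ae_zero
    refine Measure.eqOn_open_of_ae_eq (μ := volume) ?_ isOpen_ball continuousOn_ball
      continuousOn_const
    filter_upwards [sq_ae_zero] with x hx using mul_self_eq_zero.1 hx
  · intro hf
    filter_upwards [ae_restrict_mem measurableSet_ball] with x hx
    simp [hf hx]

lemma negNeumannLap_isSymmetric : (negNeumannLap n hR).IsSymmetric := fun f g => by
  simp only [neumannSpace_inner_def, coe_negNeumannLap, Pi.neg_apply, neg_mul, mul_neg,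
    integral_neg]
  rw [setIntegral_ball_lapWithin_mul_comm hR (f.2.1.of_le ENat.LEInfty.out)
    (g.2.1.of_le ENat.LEInfty.out) (f.2.2 0) (g.2.2 0)]

lemma inner_negNeumannLap_self_nonneg (f : neumannSpace n hR) :
    0 ≤ ⟪negNeumannLap n hR f, f⟫_ℝ := by
  simp only [neumannSpace_inner_def, coe_negNeumannLap, Pi.neg_apply, neg_mul, integral_neg,
    neg_nonneg]
  exact setIntegral_ball_lapWithin_mul_self_nonpos hR (f.2.1.of_le ENat.LEInfty.out) (f.2.2 0)

theorem eqOn_negNeumannLap_of_pow {τ : ℝ} (hτ : 0 < τ) {k : ℕ} (hk : k ≠ 0)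
    {f : neumannSpace n hR}
    (hf : EqOn ((negNeumannLap n hR ^ k) f : 𝔼 n → ℝ) (τ ^ k • (f : 𝔼 n → ℝ)) (ball 0 R)) :
    EqOn (negNeumannLap n hR f : 𝔼 n → ℝ) (τ • (f : 𝔼 n → ℝ)) (ball 0 R) := by
  have norm_pow_sub : ‖(negNeumannLap n hR ^ k) f - τ ^ k • f‖ = 0 :=
    neumannSpace_norm_eq_zero_iff.2 fun x hx => sub_eq_zero.2 (hf hx)
  have norm_sub := norm_apply_sub_smul_eq_zero_of_pow negNeumannLap_isSymmetric
    inner_negNeumannLap_self_nonneg hτ hk norm_pow_sub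
  exact fun x hx => sub_eq_zero.1 (neumannSpace_norm_eq_zero_iff.1 norm_sub hx)

end NeumannSpace

section Eigenfunctions

variable {n k : ℕ} {R c : ℝ} {u : 𝔼 n → ℝ}

lemma eqOn_iterate_lapWithin_mul {S : Set (𝔼 n)} (hS : IsClosed S) (hSu : UniqueDiffOn ℝ S)
    (h : EqOn ((lapWithin S)^[k] u) (c • u) S) (j : ℕ) :
    EqOn ((lapWithin S)^[k * j] u) (c ^ j • u) S := by
  induction j with
  | zero => simp [eqOn_refl]
  | succ j ih =>
    rw [Nat.mul_succ, Nat.add_comm, Function.iterate_add_apply]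
    refine (eqOn_iterate_lapWithin_of_eqOn ih k).trans fun x hx => ?_
    rw [iterate_lapWithin_const_smul hS hSu]
    simp [h hx, pow_succ, mul_assoc]

/-- `u` is smooth on the closed ball of radius `R`, solves `Δᵏ u = c u` in the open ball and
satisfies the `k` Neumann conditions of that equation. The zero function is allowed. -/
structure IsNeumannEigenfunctionBall (R : ℝ) (k : ℕ) (c : ℝ) (u : 𝔼 n → ℝ) : Prop where
  contDiffOn : ContDiffOn ℝ ∞ u (closedBall 0 R)
  iterate_lapWithin : ∀ x ∈ ball 0 R, (lapWithin (closedBall 0 R))^[k] u x = c * u x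
  hasZeroNormalDeriv : ∀ j < k, HasZeroNormalDeriv R ((lapWithin (closedBall 0 R))^[j] u)

namespace IsNeumannEigenfunctionBall

lemma eqOn_closedBall (hR : 0 < R) (hu : IsNeumannEigenfunctionBall R k c u) :
    EqOn ((lapWithin (closedBall 0 R))^[k] u) (c • u) (closedBall 0 R) :=
  EqOn.of_subset_closure hu.iterate_lapWithin
    (contDiffOn_iterate_lapWithin (uniqueDiffOn_closedBall 0 hR) hu.contDiffOn k).continuousOn
    (hu.contDiffOn.continuousOn.const_smul c) ball_subset_closedBall (closure_ball 0 hR.ne').ge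

-- Each Neumann condition of order `j ≥ k` reduces to the one of order `j - k`, as
-- `Δʲ u = c Δʲ⁻ᵏ u`.
lemma mem_neumannSpace (hR : 0 < R) (hk : k ≠ 0) (hu : IsNeumannEigenfunctionBall R k c u) :
    u ∈ neumannSpace n hR := by
  refine ⟨hu.contDiffOn, fun j => ?_⟩
  induction j using Nat.strong_induction_on with
  | _ j ih =>
    rcases lt_or_ge j k with hjk | hkj
    · exact hu.hasZeroNormalDeriv j hjk
    · have iterate_eq : EqOn ((lapWithin (closedBall 0 R))^[j] u)
          (c • (lapWithin (closedBall 0 R))^[j - k] u) (closedBall 0 R) := by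
        rw [← iterate_lapWithin_const_smul isClosed_closedBall (uniqueDiffOn_closedBall 0 hR)]
        nth_rewrite 1 [← Nat.sub_add_cancel hkj]
        rw [Function.iterate_add_apply]
        exact eqOn_iterate_lapWithin_of_eqOn (hu.eqOn_closedBall hR) (j - k)
      rw [hasZeroNormalDeriv_congr iterate_eq]
      exact hasZeroNormalDeriv_const_smul hR c (ih (j - k) (by omega))

lemma pow (hR : 0 < R) (hk : k ≠ 0) (hu : IsNeumannEigenfunctionBall R k c u) (j : ℕ) :
    IsNeumannEigenfunctionBall R (k * j) (c ^ j) u where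
  contDiffOn := hu.contDiffOn
  iterate_lapWithin _ hx := eqOn_iterate_lapWithin_mul isClosed_closedBall
    (uniqueDiffOn_closedBall 0 hR) (hu.eqOn_closedBall hR) j (ball_subset_closedBall hx)
  hasZeroNormalDeriv i _ := (hu.mem_neumannSpace hR hk).2 i

lemma of_pow (hR : 0 < R) (hk : k ≠ 0) {τ : ℝ} (hτ : 0 < τ)
    (hu : IsNeumannEigenfunctionBall R k ((-τ) ^ k) u) :
    IsNeumannEigenfunctionBall R 1 (-τ) u := by
  let f : neumannSpace n hR := ⟨u, hu.mem_neumannSpace hR hk⟩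
  have eigen_pow :
      EqOn ((negNeumannLap n hR ^ k) f : 𝔼 n → ℝ) (τ ^ k • (f : 𝔼 n → ℝ)) (ball 0 R) :=
    fun x hx => by
      simp [coe_negNeumannLap_pow, f, hu.iterate_lapWithin x hx, ← mul_assoc, ← mul_pow]
  refine ⟨hu.contDiffOn, fun x hx => ?_, fun j _ => f.2.2 j⟩
  have eigen : -lapWithin (closedBall 0 R) u x = τ * u x :=
    eqOn_negNeumannLap_of_pow hτ hk eigen_pow hx
  rw [Function.iterate_one, neg_mul, ← eigen, neg_neg]

end IsNeumannEigenfunctionBall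

lemma isNeumannEigenfunctionBall_pow_iff (hR : 0 < R) (hk : k ≠ 0) {τ : ℝ} (hτ : 0 < τ) :
    IsNeumannEigenfunctionBall R k ((-τ) ^ k) u ↔ IsNeumannEigenfunctionBall R 1 (-τ) u :=
  ⟨.of_pow hR hk hτ, fun hu => by simpa using hu.pow hR one_ne_zero k⟩

lemma isNeumannEigenfunctionBall_one_iff :
    IsNeumannEigenfunctionBall R 1 c u ↔ ContDiffOn ℝ ∞ u (closedBall 0 R) ∧
      (∀ x ∈ ball 0 R, lapWithin (closedBall 0 R) u x = c * u x) ∧ HasZeroNormalDeriv R u :=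
  ⟨fun hu => ⟨hu.contDiffOn, hu.iterate_lapWithin, hu.hasZeroNormalDeriv 0 one_pos⟩,
    fun ⟨hu, hu_eig, huR⟩ => ⟨hu, hu_eig, fun j hj => by simpa [Nat.lt_one_iff.1 hj] using huR⟩⟩

lemma isLapNeumannEigenvalueBall_iff {μ : ℝ} :
    IsLapNeumannEigenvalueBall n R μ ↔
      ∃ u : 𝔼 n → ℝ, IsNeumannEigenfunctionBall R 1 (-μ) u ∧ ∃ x ∈ closedBall 0 R, u x ≠ 0 :=
  exists_congr fun u => by
    rw [isNeumannEigenfunctionBall_one_iff]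
    exact ⟨fun ⟨hu, hu_ne, hu_eig, huR⟩ => ⟨⟨hu, hu_eig, huR⟩, hu_ne⟩,
      fun ⟨⟨hu, hu_eig, huR⟩, hu_ne⟩ => ⟨hu, hu_ne, hu_eig, huR⟩⟩

lemma isPolyLapNeumannEigenvalueBall_iff {m : ℕ} {Υ : ℝ} :
    IsPolyLapNeumannEigenvalueBall n m R Υ ↔
      ∃ u : 𝔼 n → ℝ, IsNeumannEigenfunctionBall R (2 * m) Υ u ∧ ∃ x ∈ closedBall 0 R, u x ≠ 0 :=
  exists_congr fun _ => ⟨fun ⟨hu, hu_ne, hu_eig, huR⟩ => ⟨⟨hu, hu_eig, huR⟩, hu_ne⟩,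
    fun ⟨⟨hu, hu_eig, huR⟩, hu_ne⟩ => ⟨hu, hu_ne, hu_eig, huR⟩⟩

lemma isPolyLapNeumannEigenvalueBall_pow_iff (hR : 0 < R) {m : ℕ} (hm : m ≠ 0) {μ : ℝ}
    (hμ : 0 < μ) :
    IsPolyLapNeumannEigenvalueBall n m R (μ ^ (2 * m)) ↔ IsLapNeumannEigenvalueBall n R μ := by
  rw [isPolyLapNeumannEigenvalueBall_iff, isLapNeumannEigenvalueBall_iff,
    ← (even_two_mul m).neg_pow]
  simp only [isNeumannEigenfunctionBall_pow_iff hR (mul_ne_zero two_ne_zero hm) hμ]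

theorem setOf_isPolyLapNeumannEigenvalueBall_eq_image_pow (n : ℕ) (hR : 0 < R) {m : ℕ}
    (hm : m ≠ 0) :
    {Υ | 0 < Υ ∧ IsPolyLapNeumannEigenvalueBall n m R Υ} =
      (· ^ (2 * m)) '' {μ | 0 < μ ∧ IsLapNeumannEigenvalueBall n R μ} := by
  ext Υ
  constructor
  · rintro ⟨hΥ, hΥ_poly⟩
    have root_pow : (Υ ^ ((2 * m : ℕ) : ℝ)⁻¹) ^ (2 * m) = Υ :=
      Real.rpow_inv_natCast_pow hΥ.le (mul_ne_zero two_ne_zero hm)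
    have root_pos : 0 < Υ ^ ((2 * m : ℕ) : ℝ)⁻¹ := Real.rpow_pos_of_pos hΥ _
    rw [← root_pow, isPolyLapNeumannEigenvalueBall_pow_iff hR hm root_pos] at hΥ_poly
    exact ⟨_, ⟨root_pos, hΥ_poly⟩, root_pow⟩
  · rintro ⟨μ, ⟨hμ, hμ_lap⟩, rfl⟩
    exact ⟨pow_pos hμ _, (isPolyLapNeumannEigenvalueBall_pow_iff hR hm hμ).2 hμ_lap⟩

end Eigenfunctions

theorem first_lap_eigenfunction_is_polyharmonic_eigenfunction_general {n m : ℕ} (hm : 1 ≤ m)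
    (R : ℝ) (hR : 0 < R) (μ₁ Υ₁ : ℝ)
    (hμ : IsLeast {μ : ℝ | 0 < μ ∧ IsLapNeumannEigenvalueBall n R μ} μ₁)
    (hΥ : IsLeast {Υ : ℝ | 0 < Υ ∧ IsPolyLapNeumannEigenvalueBall n m R Υ} Υ₁)
    (u : EuclideanSpace ℝ (Fin n) → ℝ)
    (hu_smooth : ContDiffOn ℝ (⊤ : ℕ∞) u (closedBall 0 R))
    (hu_eig : ∀ x ∈ ball (0 : EuclideanSpace ℝ (Fin n)) R,
      lapWithin (closedBall 0 R) u x = -μ₁ * u x)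
    (hu_bd : ∀ x : EuclideanSpace ℝ (Fin n), ‖x‖ = R →
      fderivWithin ℝ u (closedBall 0 R) x (‖x‖⁻¹ • x) = 0) :
    (∀ x ∈ ball (0 : EuclideanSpace ℝ (Fin n)) R,
      (lapWithin (closedBall 0 R))^[2 * m] u x = Υ₁ * u x) ∧
    (∀ j < 2 * m, ∀ x : EuclideanSpace ℝ (Fin n), ‖x‖ = R →
      fderivWithin ℝ ((lapWithin (closedBall 0 R))^[j] u) (closedBall 0 R) x (‖x‖⁻¹ • x) = 0) := by
  have hm_ne : m ≠ 0 := Nat.one_le_iff_ne_zero.1 hm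
  have pow_monotoneOn : MonotoneOn (fun μ : ℝ => μ ^ (2 * m))
      {μ | 0 < μ ∧ IsLapNeumannEigenvalueBall n R μ} :=
    fun _ hμ' _ _ hle => pow_le_pow_left₀ hμ'.1.le hle _
  have first_eigenvalue_eq : Υ₁ = μ₁ ^ (2 * m) := hΥ.unique <| by
    rw [setOf_isPolyLapNeumannEigenvalueBall_eq_image_pow n hR hm_ne]
    exact pow_monotoneOn.map_isLeast hμ
  have hu_lap : IsNeumannEigenfunctionBall R 1 (-μ₁) u :=
    isNeumannEigenfunctionBall_one_iff.2 ⟨hu_smooth, hu_eig, hu_bd⟩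
  have hu_poly := (isNeumannEigenfunctionBall_pow_iff hR
    (mul_ne_zero two_ne_zero hm_ne) hμ.1.1).2 hu_lap
  rw [(even_two_mul m).neg_pow, ← first_eigenvalue_eq] at hu_poly
  exact ⟨hu_poly.iterate_lapWithin, hu_poly.hasZeroNormalDeriv⟩

/-- **First Neumann eigenfunctions of `Δ` on a ball are first Neumann eigenfunctions of
`Δ^(2m)`.** If `u` is a nonzero function, smooth on the closed ball `B_R(0) ⊂ ℝⁿ` (`n ≥ 2`,
`R > 0`, `m ≥ 1`), with `Δu = −μ₁(B_R(0))·u` in the ball and `∂u/∂n = 0` on the sphere, then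
`Δ^(2m)u = Υ̂₁(B_R(0))·u` in the ball together with `∂(Δʲu)/∂n = 0` on the sphere for all
`j = 0, 1, …, 2m−1`. -/
theorem first_lap_eigenfunction_is_polyharmonic_eigenfunction {n m : ℕ} (hn : 2 ≤ n)
    (hm : 1 ≤ m) (R : ℝ) (hR : 0 < R) (μ₁ Υ₁ : ℝ)
    (hμ : IsLeast {μ : ℝ | 0 < μ ∧ IsLapNeumannEigenvalueBall n R μ} μ₁)
    (hΥ : IsLeast {Υ : ℝ | 0 < Υ ∧ IsPolyLapNeumannEigenvalueBall n m R Υ} Υ₁)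
    (u : EuclideanSpace ℝ (Fin n) → ℝ)
    (hu_smooth : ContDiffOn ℝ (⊤ : ℕ∞) u (closedBall 0 R))
    (hu_ne : ∃ x ∈ closedBall (0 : EuclideanSpace ℝ (Fin n)) R, u x ≠ 0)
    (hu_eig : ∀ x ∈ ball (0 : EuclideanSpace ℝ (Fin n)) R,
      lapWithin (closedBall 0 R) u x = -μ₁ * u x)
    (hu_bd : ∀ x : EuclideanSpace ℝ (Fin n), ‖x‖ = R →
      fderivWithin ℝ u (closedBall 0 R) x (‖x‖⁻¹ • x) = 0) :
    (∀ x ∈ ball (0 : EuclideanSpace ℝ (Fin n)) R,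
      (lapWithin (closedBall 0 R))^[2 * m] u x = Υ₁ * u x) ∧
    (∀ j < 2 * m, ∀ x : EuclideanSpace ℝ (Fin n), ‖x‖ = R →
      fderivWithin ℝ ((lapWithin (closedBall 0 R))^[j] u) (closedBall 0 R) x (‖x‖⁻¹ • x) = 0) :=
  first_lap_eigenfunction_is_polyharmonic_eigenfunction_general hm R hR μ₁ Υ₁ hμ hΥ u hu_smooth
    hu_eig hu_bd
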